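/- Let C be an [n,k] linear code over F_q. Then for every 1 ≤ i ≤ k, the i-th CEZ greedy weight of C equals the i-th CEZ greedy weight of its matroid M_C: g_i(C) = g_i(M_C). -/

import Mathlib

open Finset
open scoped Classical

noncomputable section

/-- The rank in the matroid `M_C`: `r(X)` is the rank of the column submatrix `H_X`. -/
def colRank {F : Type*} [Field F] {m n : ℕ} (H : Matrix (Fin m) (Fin n) F)
    (X : Finset (Fin n)) : ℕ :=
  Module.finrank F (Submodule.span F ((fun j i => H i j) '' (X : Set (Fin n))))

/-- The nullity function of the matroid `M_C`: `n(X) = |X| - r(X)`. -/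
def nulC {F : Type*} [Field F] {m n : ℕ} (H : Matrix (Fin m) (Fin n) F)
    (X : Finset (Fin n)) : ℕ :=
  X.card - colRank H X

/-- The support of a word. -/
def supp {F : Type*} [Field F] {n : ℕ} (c : Fin n → F) : Finset (Fin n) :=
  Finset.univ.filter (fun i => c i ≠ 0)

/-- The support of a subcode. -/
def suppD {F : Type*} [Field F] {n : ℕ} (D : Submodule F (Fin n → F)) : Finset (Fin n) :=
  Finset.univ.filter (fun i => ∃ c ∈ D, c i ≠ 0)

/-- The weight of a subcode: the cardinality of its support. -/
def wt {F : Type*} [Field F] {n : ℕ} (D : Submodule F (Fin n → F)) : ℕ := (suppD D).card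

/-- The subcode `C(X) = {c ∈ C : Supp(c) ⊆ X}`. -/
def codeRestrict {F : Type*} [Field F] {n : ℕ} (C : Submodule F (Fin n → F))
    (X : Finset (Fin n)) : Submodule F (Fin n → F) where
  carrier := {c | c ∈ C ∧ ∀ i ∉ X, c i = 0}
  add_mem' := by
    rintro a b ⟨ha, ha0⟩ ⟨hb, hb0⟩
    exact ⟨C.add_mem ha hb, fun i hi => by simp [Pi.add_apply, ha0 i hi, hb0 i hi]⟩
  zero_mem' := ⟨C.zero_mem, fun i _ => rfl⟩
  smul_mem' := by
    rintro r a ⟨ha, ha0⟩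
    exact ⟨C.smul_mem r ha, fun i hi => by simp [Pi.smul_apply, ha0 i hi]⟩

/-- The code defined by the parity check matrix `H`: `C = {x : H x = 0}`. -/
def codeOf {F : Type*} [Field F] {m n : ℕ} (H : Matrix (Fin m) (Fin n) F) :
    Submodule F (Fin n → F) :=
  LinearMap.ker H.mulVecLin

/-- The `r`-th generalized Hamming weight of a code `C`. -/
def dC {F : Type*} [Field F] {n : ℕ} (C : Submodule F (Fin n → F)) (r : ℕ) : ℕ :=
  sInf {w | ∃ D : Submodule F (Fin n → F), D ≤ C ∧ Module.finrank F D = r ∧ wt D = w}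

/-- `D` computes `d_r(C)`: `D ⊆ C`, `dim D = r` and `wt(D) = d_r(C)`. -/
def Computes {F : Type*} [Field F] {n : ℕ} (C : Submodule F (Fin n → F)) (r : ℕ)
    (D : Submodule F (Fin n → F)) : Prop :=
  D ≤ C ∧ Module.finrank F D = r ∧ wt D = dC C r

end
noncomputable section

/-- `D` is a CEZ greedy `i`-subcode of `C`: for `i = 1` a `1`-dimensional subcode of minimal
weight; for `i ≥ 2` an `i`-dimensional subcode containing some subcode computing `d_{i-1}(C)`,
of minimal weight among all such. -/
def IsCEZ {F : Type*} [Field F] {n : ℕ} (C : Submodule F (Fin n → F)) (i : ℕ)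
    (D : Submodule F (Fin n → F)) : Prop :=
  if i ≤ 1 then
    D ≤ C ∧ Module.finrank F D = 1 ∧
      ∀ D₂ ≤ C, Module.finrank F D₂ = 1 → wt D ≤ wt D₂
  else
    D ≤ C ∧ Module.finrank F D = i ∧ (∃ D', Computes C (i - 1) D' ∧ D' ≤ D) ∧
      ∀ D₂ ≤ C, Module.finrank F D₂ = i →
        (∃ D'', Computes C (i - 1) D'' ∧ D'' ≤ D₂) → wt D ≤ wt D₂

/-- The generalized Hamming weights of the matroid `M_C`. -/
def dM {F : Type*} [Field F] {m n : ℕ} (H : Matrix (Fin m) (Fin n) F) (i : ℕ) : ℕ :=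
  sInf {c | ∃ X, nulC H X = i ∧ X.card = c}

/-- The CEZ greedy weights of the matroid `M_C`: `g_1 = d_1` and for `i ≥ 2`,
`g_i = min {|σ| : σ ∈ 𝒩_i, ∃ τ ∈ 𝒩_{i-1}, τ ⊆ σ, |τ| = d_{i-1}}`. -/
def gM {F : Type*} [Field F] {m n : ℕ} (H : Matrix (Fin m) (Fin n) F) (i : ℕ) : ℕ :=
  if i ≤ 1 then dM H 1
  else sInf {c | ∃ X, nulC H X = i ∧
    (∃ Y, nulC H Y = i - 1 ∧ Y ⊆ X ∧ Y.card = dM H (i - 1)) ∧ X.card = c}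

/-!
The subcode `C(X)` is the kernel of `H` on the words supported in `X`, so rank-nullity gives
`n(X) = dim C(X)`. Hence a set in `𝒩_r` yields an `r`-dimensional subcode of weight at most `|X|`.
Conversely `n(Supp(D)) ≥ dim D` for every subcode `D`, and the nullity grows by at most one when an
element is added, so any intermediate nullity is attained on a set between two given ones. Shrinking
supports in this way shows `d_r(C) = d_r(M_C)`. If `D'` computes `d_r(C)`, its support then has
nullity exactly `r`, and for `D' ⊆ D` with `dim D = r + 1` one shrinks `Supp(D)` to a set of
nullity `r + 1` still containing `Supp(D')`.
-/

section Preliminaries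

lemma sInf_eq_sInf_of_isCoinitialFor {α : Type*} [ConditionallyCompleteLattice α] [OrderBot α]
    {s t : Set α} (hst : IsCoinitialFor s t) (hts : IsCoinitialFor t s) : sInf s = sInf t := by
  have hlb : lowerBounds s = lowerBounds t :=
    (lowerBounds_mono_of_isCoinitialFor hts).antisymm (lowerBounds_mono_of_isCoinitialFor hst)
  rcases s.eq_empty_or_nonempty with rfl | hs
  · have ht : t = ∅ := Set.eq_empty_of_forall_notMem fun b hb ↦ by simpa using hts hb
    rw [ht]
  · have ht : t.Nonempty := hs.elim fun a ha ↦ (hst ha).imp fun _ ↦ And.left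
    have hglb : IsGLB t (sInf s) := (isGLB_congr hlb).mp (isGLB_csInf hs (OrderBot.bddBelow s))
    exact (hglb.csInf_eq ht).symm

lemma exists_between_eq_of_insert_le_add_one {α : Type*} [DecidableEq α] {f : Finset α → ℕ}
    (hf : ∀ a s, f (insert a s) ≤ f s + 1) {s t : Finset α} {r : ℕ} (hst : s ⊆ t)
    (hs : f s ≤ r) (ht : r ≤ f t) : ∃ u, s ⊆ u ∧ u ⊆ t ∧ f u = r := by
  obtain ⟨u, hut, ⟨hsu, hru⟩, hmin⟩ :=
    exists_minimal_le_of_wellFoundedLT (fun u ↦ s ⊆ u ∧ r ≤ f u) t ⟨hst, ht⟩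
  refine ⟨u, hsu, hut, le_antisymm (not_lt.mp fun hlt ↦ ?_) hru⟩
  have hne : s ≠ u := by
    rintro rfl
    exact hs.not_gt hlt
  obtain ⟨a, hau, has⟩ := Finset.exists_of_ssubset (hsu.ssubset_of_ne hne)
  have hstep : f u ≤ f (u.erase a) + 1 := by
    simpa only [Finset.insert_erase hau] using hf a (u.erase a)
  have herase : u ⊆ u.erase a :=
    hmin ⟨Finset.subset_erase.mpr ⟨hsu, has⟩, by omega⟩ (Finset.erase_subset a u)
  exact Finset.notMem_erase a u (herase hau)

lemma finrank_map_spanSubset_add_finrank_ker_inf {F ι V : Type*} [Field F] [Finite ι]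
    [AddCommGroup V] [Module F V] (f : (ι → F) →ₗ[F] V) (s : Set ι) :
    Module.finrank F ((Pi.spanSubset F s).map f) +
      Module.finrank F ↥(LinearMap.ker f ⊓ Pi.spanSubset F s) = s.ncard := by
  have hker := Submodule.finrank_map_subtype_eq (Pi.spanSubset F s)
    (LinearMap.ker (f.domRestrict (Pi.spanSubset F s)))
  rw [LinearMap.ker_domRestrict, Submodule.map_comap_subtype, inf_comm] at hker
  rw [hker, ← LinearMap.ker_domRestrict, ← LinearMap.range_domRestrict,
    LinearMap.finrank_range_add_finrank_ker, Pi.dim_spanSubset]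

lemma map_mulVecLin_spanSubset {R m n : Type*} [CommSemiring R] [Fintype n] (A : Matrix m n R)
    (s : Set n) : (Pi.spanSubset R s).map A.mulVecLin = Submodule.span R (A.col '' s) := by
  simp [Pi.spanSubset, Submodule.map_span, Set.image_image, Matrix.col_def]

end Preliminaries

section Supports

variable {F : Type*} [Field F] {n : ℕ} {C D E : Submodule F (Fin n → F)} {X Y : Finset (Fin n)}

lemma suppD_subset_iff : suppD D ⊆ X ↔ ∀ c ∈ D, ∀ j ∉ X, c j = 0 := by
  simp only [suppD, Finset.subset_iff, Finset.mem_filter, Finset.mem_univ, true_and]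
  grind

lemma le_codeRestrict_iff : D ≤ codeRestrict C X ↔ D ≤ C ∧ suppD D ⊆ X := by
  rw [suppD_subset_iff]
  exact forall₂_and

lemma codeRestrict_le : codeRestrict C X ≤ C :=
  (le_codeRestrict_iff.mp le_rfl).1

lemma suppD_codeRestrict_subset : suppD (codeRestrict C X) ⊆ X :=
  (le_codeRestrict_iff.mp le_rfl).2

lemma wt_codeRestrict_le_card : wt (codeRestrict C X) ≤ X.card :=
  Finset.card_le_card suppD_codeRestrict_subset

lemma codeRestrict_mono (h : X ⊆ Y) : codeRestrict C X ≤ codeRestrict C Y :=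
  le_codeRestrict_iff.mpr ⟨codeRestrict_le, suppD_codeRestrict_subset.trans h⟩

lemma suppD_mono (h : D ≤ E) : suppD D ⊆ suppD E :=
  suppD_subset_iff.mpr fun c hc ↦ suppD_subset_iff.mp subset_rfl c (h hc)

lemma codeRestrict_eq_inf_spanSubset : codeRestrict C X = C ⊓ Pi.spanSubset F X := by
  ext c
  simp only [Submodule.mem_inf, Pi.mem_spanSubset_iff, Finset.mem_coe]
  rfl

end Supports

section Nullity

variable {F : Type*} [Field F] {m n : ℕ} (H : Matrix (Fin m) (Fin n) F) {X Y : Finset (Fin n)}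

lemma colRank_add_finrank_codeRestrict (X : Finset (Fin n)) :
    colRank H X + Module.finrank F (codeRestrict (codeOf H) X) = X.card := by
  rw [codeRestrict_eq_inf_spanSubset, ← Set.ncard_coe_finset,
    ← finrank_map_spanSubset_add_finrank_ker_inf H.mulVecLin, map_mulVecLin_spanSubset]
  rfl

lemma nulC_eq_finrank_codeRestrict (X : Finset (Fin n)) :
    nulC H X = Module.finrank F (codeRestrict (codeOf H) X) :=
  (Nat.eq_sub_of_add_eq' (colRank_add_finrank_codeRestrict H X)).symm

lemma finrank_le_nulC_suppD {D : Submodule F (Fin n → F)} (hD : D ≤ codeOf H) :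
    Module.finrank F D ≤ nulC H (suppD D) := by
  rw [nulC_eq_finrank_codeRestrict]
  exact Submodule.finrank_mono (le_codeRestrict_iff.mpr ⟨hD, subset_rfl⟩)

lemma colRank_mono (h : X ⊆ Y) : colRank H X ≤ colRank H Y :=
  Submodule.finrank_mono (Submodule.span_mono (Set.image_mono (Finset.coe_subset.mpr h)))

lemma nulC_insert_le (a : Fin n) (X : Finset (Fin n)) :
    nulC H (insert a X) ≤ nulC H X + 1 := by
  have hcard := Finset.card_insert_le a X
  have hrank := colRank_mono H (Finset.subset_insert a X)
  simp only [nulC]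
  omega

lemma exists_nulC_eq_between {r : ℕ} (hXY : X ⊆ Y) (hX : nulC H X ≤ r) (hY : r ≤ nulC H Y) :
    ∃ Z, X ⊆ Z ∧ Z ⊆ Y ∧ nulC H Z = r :=
  exists_between_eq_of_insert_le_add_one (nulC_insert_le H) hXY hX hY

lemma exists_subset_nulC_eq {r : ℕ} (hX : r ≤ nulC H X) : ∃ Z ⊆ X, nulC H Z = r := by
  obtain ⟨Z, -, hZ⟩ :=
    exists_nulC_eq_between H (Finset.empty_subset X) (by simp [nulC]) hX
  exact ⟨Z, hZ⟩

end Nullity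

section HammingWeights

variable {F : Type*} [Field F] {m n r : ℕ} {C D : Submodule F (Fin n → F)}
  {H : Matrix (Fin m) (Fin n) F} {X : Finset (Fin n)}

lemma dC_le_wt (hD : D ≤ C) : dC C (Module.finrank F D) ≤ wt D :=
  Nat.sInf_le ⟨D, hD, rfl, rfl⟩

lemma dM_le_card : dM H (nulC H X) ≤ X.card :=
  Nat.sInf_le ⟨X, rfl, rfl⟩

lemma dC_eq_dM (H : Matrix (Fin m) (Fin n) F) (r : ℕ) : dC (codeOf H) r = dM H r := by
  apply sInf_eq_sInf_of_isCoinitialFor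
  · rintro - ⟨D, hD, rfl, rfl⟩
    obtain ⟨Z, hZD, hZ⟩ := exists_subset_nulC_eq H (finrank_le_nulC_suppD H hD)
    exact ⟨Z.card, ⟨Z, hZ, rfl⟩, Finset.card_le_card hZD⟩
  · rintro - ⟨X, hX, rfl⟩
    exact ⟨wt (codeRestrict (codeOf H) X),
      ⟨_, codeRestrict_le, (nulC_eq_finrank_codeRestrict H X).symm.trans hX, rfl⟩,
      wt_codeRestrict_le_card⟩

lemma nulC_eq_of_card_eq_dM (hcard : X.card = dM H r) (hr : r ≤ nulC H X) : nulC H X = r := by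
  obtain ⟨Z, hZX, rfl⟩ := exists_subset_nulC_eq H hr
  rw [Finset.eq_of_subset_of_card_le hZX (hcard.trans_le dM_le_card)]

lemma Computes.nulC_suppD (hD : Computes (codeOf H) r D) : nulC H (suppD D) = r :=
  nulC_eq_of_card_eq_dM (hD.2.2.trans (dC_eq_dM H r)) (hD.2.1 ▸ finrank_le_nulC_suppD H hD.1)

lemma computes_codeRestrict (hX : nulC H X = r) (hcard : X.card = dM H r) :
    Computes (codeOf H) r (codeRestrict (codeOf H) X) := by
  have hdim : Module.finrank F (codeRestrict (codeOf H) X) = r :=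
    (nulC_eq_finrank_codeRestrict H X).symm.trans hX
  refine ⟨codeRestrict_le, hdim, le_antisymm ?_ (hdim ▸ dC_le_wt codeRestrict_le)⟩
  rw [dC_eq_dM, ← hcard]
  exact wt_codeRestrict_le_card

end HammingWeights

section GreedyWeights

variable {F : Type*} [Field F] {m n r : ℕ} {C D : Submodule F (Fin n → F)}
  {H : Matrix (Fin m) (Fin n) F} {X : Finset (Fin n)}

/-- The `(r + 1)`-dimensional subcodes of `C` containing one that computes `d_r(C)`: those among
which a CEZ greedy `(r + 1)`-subcode has minimal weight, for `1 ≤ r`. -/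
def IsGreedyExtension (C : Submodule F (Fin n → F)) (r : ℕ) (D : Submodule F (Fin n → F)) : Prop :=
  D ≤ C ∧ Module.finrank F D = r + 1 ∧ ∃ D', Computes C r D' ∧ D' ≤ D

/-- The sets in `𝒩_{r+1}` containing a set in `𝒩_r` of cardinality `d_r`: the matroid counterpart
of `IsGreedyExtension`. -/
def IsGreedySuperset (H : Matrix (Fin m) (Fin n) F) (r : ℕ) (X : Finset (Fin n)) : Prop :=
  nulC H X = r + 1 ∧ ∃ Y, nulC H Y = r ∧ Y ⊆ X ∧ Y.card = dM H r

lemma IsGreedyExtension.exists_isGreedySuperset (hD : IsGreedyExtension (codeOf H) r D) :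
    ∃ X, IsGreedySuperset H r X ∧ X ⊆ suppD D := by
  obtain ⟨hDC, hdim, D', hD', hD'D⟩ := hD
  have hsupp : r + 1 ≤ nulC H (suppD D) := hdim ▸ finrank_le_nulC_suppD H hDC
  obtain ⟨X, hD'X, hXD, hX⟩ := exists_nulC_eq_between H (suppD_mono hD'D)
    (hD'.nulC_suppD.trans_le r.le_succ) hsupp
  exact ⟨X, ⟨hX, suppD D', hD'.nulC_suppD, hD'X, hD'.2.2.trans (dC_eq_dM H r)⟩, hXD⟩

lemma IsGreedySuperset.isGreedyExtension_codeRestrict (hX : IsGreedySuperset H r X) :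
    IsGreedyExtension (codeOf H) r (codeRestrict (codeOf H) X) := by
  obtain ⟨hX, Y, hY, hYX, hcard⟩ := hX
  exact ⟨codeRestrict_le, (nulC_eq_finrank_codeRestrict H X).symm.trans hX,
    codeRestrict (codeOf H) Y, computes_codeRestrict hY hcard, codeRestrict_mono hYX⟩

lemma sInf_wt_isGreedyExtension (H : Matrix (Fin m) (Fin n) F) (r : ℕ) :
    sInf (wt '' {D | IsGreedyExtension (codeOf H) r D}) =
      sInf (Finset.card '' {X | IsGreedySuperset H r X}) := by
  apply sInf_eq_sInf_of_isCoinitialFor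
  · rintro - ⟨D, hD, rfl⟩
    obtain ⟨X, hX, hXD⟩ := hD.exists_isGreedySuperset
    exact ⟨X.card, ⟨X, hX, rfl⟩, Finset.card_le_card hXD⟩
  · rintro - ⟨X, hX, rfl⟩
    exact ⟨_, ⟨_, hX.isGreedyExtension_codeRestrict, rfl⟩, wt_codeRestrict_le_card⟩

lemma IsCEZ.wt_eq_dC (hD : IsCEZ C 1 D) : wt D = dC C 1 := by
  obtain ⟨hDC, hdim, hmin⟩ : D ≤ C ∧ Module.finrank F D = 1 ∧ _ := by simpa [IsCEZ] using hD
  symm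
  apply IsLeast.csInf_eq
  refine ⟨⟨D, hDC, hdim, rfl⟩, ?_⟩
  rintro - ⟨E, hEC, hE, rfl⟩
  exact hmin E hEC hE

lemma IsCEZ.isLeast_wt (hr : 1 ≤ r) (hD : IsCEZ C (r + 1) D) :
    IsLeast (wt '' {D | IsGreedyExtension C r D}) (wt D) := by
  rw [IsCEZ, if_neg (by omega), Nat.add_sub_cancel] at hD
  obtain ⟨hDC, hdim, hD', hmin⟩ := hD
  refine ⟨⟨D, ⟨hDC, hdim, hD'⟩, rfl⟩, ?_⟩
  rintro - ⟨E, ⟨hEC, hE, hE'⟩, rfl⟩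
  exact hmin E hEC hE hE'

lemma gM_one (H : Matrix (Fin m) (Fin n) F) : gM H 1 = dM H 1 :=
  if_pos le_rfl

lemma gM_succ (H : Matrix (Fin m) (Fin n) F) (hr : 1 ≤ r) :
    gM H (r + 1) = sInf (Finset.card '' {X | IsGreedySuperset H r X}) := by
  rw [gM, if_neg (by omega), Nat.add_sub_cancel]
  simp only [Set.image, IsGreedySuperset, Set.mem_ofPred_eq, and_assoc]

end GreedyWeights

theorem statement14_general {F : Type*} [Field F] {m n : ℕ} (H : Matrix (Fin m) (Fin n) F)
    (i : ℕ) (hi1 : 1 ≤ i) (D : Submodule F (Fin n → F)) (hD : IsCEZ (codeOf H) i D) :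
    wt D = gM H i := by
  obtain ⟨r, rfl⟩ := Nat.exists_eq_add_of_le' hi1
  rcases r.eq_zero_or_pos with rfl | hr
  · rw [hD.wt_eq_dC, dC_eq_dM, gM_one]
  · rw [← (hD.isLeast_wt hr).csInf_eq, sInf_wt_isGreedyExtension, gM_succ H hr]

/-- the CEZ greedy weights of an `[n,k]` code `C` coincide with the CEZ greedy
weights of its matroid `M_C`: the weight of any CEZ greedy `i`-subcode of `C` is `g_i(M_C)`. -/
theorem statement14 {F : Type*} [Field F] [Fintype F] {m k n : ℕ} (hmk : m + k = n)
    (H : Matrix (Fin m) (Fin n) F) (hH : H.rank = m)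
    (i : ℕ) (hi1 : 1 ≤ i) (hik : i ≤ k)
    (D : Submodule F (Fin n → F)) (hD : IsCEZ (codeOf H) i D) :
    wt D = gM H i :=
  statement14_general H i hi1 D hD

end
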